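/- arXiv:1807.05917 — 2 statements merged into one kernel-verified Lean document; each statement's English description precedes it below -/
import Mathlib

section
/- Let d ∈ ℕ, let O ⊆ ℝᵈ be a nonempty compact set, let T > 0, and let u : [0,T] × O → ℝ be bounded and upper semicontinuous and v : [0,T] × O → ℝ be bounded and lower semicontinuous. For each n ∈ ℕ the supremum Θ_n := sup{ u(t, x₁) − v(t, x₂) − (n/2)·|x₁ − x₂|² : t ∈ [0,T], x₁, x₂ ∈ O } is attained at some point (t_n, x₁ⁿ, x₂ⁿ). Moreover, Θ_n → sup{ u(t,x) − v(t,x) : (t,x) ∈ [0,T] × O } as n → ∞, and there is a subsequence (n_k) along which n_k·|x₁^{n_k} − x₂^{n_k}|² → 0 as k → ∞. -/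
open Filter

/-!
Write `M α` for the supremum over a compact set `K` of `f - α * p`, where `p ≥ 0` is a penalty.

As `α` grows these functions decrease, to `f` on `{p = 0}` and to `-∞` elsewhere. A level `c` above
the supremum of `f` on `K ∩ {p = 0}` is therefore eventually passed at every point; semicontinuity
makes this locally uniform and compactness makes it uniform, so `M α` converges to that supremum.

If `x` maximizes `f - α * p`, testing `M (α / 2)` at `x` gives `α * p x ≤ 2 * (M (α / 2) - M α)`,
and the right-hand side tends to `0` since both terms have the same limit. The doubling of variables
is the case of the penalty `|x₁ - x₂|²`, with `α = n / 2`, on triples `(t, x₁, x₂)`.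
-/

open Set Topology

section Penalization

variable {X : Type*} {K : Set X} {f p : X → ℝ} {α : ℝ}

/-- The supremum over `K` of the objective `f` penalized by `α` times the penalty `p`. It is a real
`sSup`, hence meaningful only when `K` is nonempty and `f - α * p` is bounded above on `K`. -/
noncomputable def penalizedSup (K : Set X) (f p : X → ℝ) (α : ℝ) : ℝ :=
  sSup ((fun x => f x - α * p x) '' K)

variable [TopologicalSpace X]

lemma upperSemicontinuousOn_sub {g : X → ℝ} (hf : UpperSemicontinuousOn f K)
    (hg : LowerSemicontinuousOn g K) : UpperSemicontinuousOn (fun x => f x - g x) K := by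
  simpa only [sub_eq_add_neg, Function.comp_apply] using
    hf.add (continuous_neg.comp_lowerSemicontinuousOn_antitone hg fun _ _ => neg_le_neg)

lemma upperSemicontinuousOn_sub_mul (hf : UpperSemicontinuousOn f K)
    (hp : LowerSemicontinuousOn p K) (hα : 0 ≤ α) :
    UpperSemicontinuousOn (fun x => f x - α * p x) K :=
  upperSemicontinuousOn_sub hf <|
    (continuous_const_mul α).comp_lowerSemicontinuousOn hp (monotone_mul_left_of_nonneg hα)

lemma le_penalizedSup (hK : IsCompact K) (hf : UpperSemicontinuousOn f K)
    (hp : LowerSemicontinuousOn p K) (hα : 0 ≤ α) {x : X} (hx : x ∈ K) :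
    f x - α * p x ≤ penalizedSup K f p α :=
  le_csSup ((upperSemicontinuousOn_sub_mul hf hp hα).bddAbove_of_isCompact hK)
    (mem_image_of_mem _ hx)

lemma exists_eq_penalizedSup (hK : IsCompact K) (hne : K.Nonempty)
    (hf : UpperSemicontinuousOn f K) (hp : LowerSemicontinuousOn p K) (hα : 0 ≤ α) :
    ∃ x ∈ K, f x - α * p x = penalizedSup K f p α := by
  obtain ⟨x, hx, hmax⟩ := (upperSemicontinuousOn_sub_mul hf hp hα).exists_isMaxOn hne hK
  have hgreatest : IsGreatest ((fun x => f x - α * p x) '' K) (f x - α * p x) :=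
    ⟨mem_image_of_mem _ hx, forall_mem_image.2 hmax⟩
  exact ⟨x, hx, hgreatest.csSup_eq.symm⟩

lemma sSup_image_zeros_le_penalizedSup (hK : IsCompact K) (hf : UpperSemicontinuousOn f K)
    (hp : LowerSemicontinuousOn p K) (hne : {x ∈ K | p x = 0}.Nonempty) (hα : 0 ≤ α) :
    sSup (f '' {x ∈ K | p x = 0}) ≤ penalizedSup K f p α := by
  refine csSup_le (hne.image f) (forall_mem_image.2 fun x hx => ?_)
  simpa only [hx.2, mul_zero, sub_zero] using le_penalizedSup hK hf hp hα hx.1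

lemma exists_nonneg_sub_mul_lt {a b c : ℝ} (hb : 0 ≤ b) (h : b = 0 → a < c) :
    ∃ α : ℝ, 0 ≤ α ∧ a - α * b < c := by
  rcases hb.eq_or_lt with hb | hb
  · exact ⟨0, le_rfl, by simpa using h hb.symm⟩
  · have hlim : Tendsto (fun α : ℝ => α * b) atTop atTop := tendsto_id.atTop_mul_const hb
    obtain ⟨α, hα, hlt⟩ :=
      ((eventually_ge_atTop 0).and (hlim.eventually_gt_atTop (a - c))).exists
    exact ⟨α, hα, by linarith⟩

lemma eventually_forall_sub_mul_lt (hK : IsCompact K) (hf : UpperSemicontinuousOn f K)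
    (hp : LowerSemicontinuousOn p K) (hp₀ : ∀ x ∈ K, 0 ≤ p x) {c : ℝ}
    (hc : ∀ x ∈ K, p x = 0 → f x < c) :
    ∀ᶠ α in atTop, ∀ x ∈ K, f x - α * p x < c := by
  refine hK.induction_on (p := fun s => ∀ᶠ α in atTop, ∀ x ∈ s, f x - α * p x < c)
    (by simp) (fun s t hst ht => ht.mono fun α h x hx => h x (hst hx)) ?_ fun x hx => ?_
  · intro s t hs ht
    filter_upwards [hs, ht] with α hs ht x hx using hx.elim (hs x) (ht x)
  · obtain ⟨α₀, hα₀, hlt⟩ := exists_nonneg_sub_mul_lt (hp₀ x hx) (hc x hx)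
    have hnear : ∀ᶠ y in 𝓝[K] x, f y - α₀ * p y < c :=
      upperSemicontinuousOn_sub_mul hf hp hα₀ x hx c hlt
    refine ⟨_, inter_mem hnear self_mem_nhdsWithin, ?_⟩
    filter_upwards [eventually_ge_atTop α₀] with α hα y ⟨hy, hyK⟩
    calc f y - α * p y ≤ f y - α₀ * p y :=
          sub_le_sub_left (mul_le_mul_of_nonneg_right hα (hp₀ y hyK)) _
      _ < c := hy

lemma tendsto_penalizedSup (hK : IsCompact K) (hf : UpperSemicontinuousOn f K)
    (hp : LowerSemicontinuousOn p K) (hp₀ : ∀ x ∈ K, 0 ≤ p x)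
    (hne : {x ∈ K | p x = 0}.Nonempty) :
    Tendsto (penalizedSup K f p) atTop (𝓝 (sSup (f '' {x ∈ K | p x = 0}))) := by
  refine tendsto_order.2 ⟨fun c hc => ?_, fun c hc => ?_⟩
  · filter_upwards [eventually_ge_atTop 0] with α hα
    exact hc.trans_le (sSup_image_zeros_le_penalizedSup hK hf hp hne hα)
  · have hbdd : BddAbove (f '' {x ∈ K | p x = 0}) :=
      (hf.bddAbove_of_isCompact hK).mono (image_mono (sep_subset _ _))
    have hzeros : ∀ x ∈ K, p x = 0 → f x < c := fun x hx hpx =>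
      (le_csSup hbdd (mem_image_of_mem f ⟨hx, hpx⟩)).trans_lt hc
    filter_upwards [eventually_ge_atTop 0, eventually_forall_sub_mul_lt hK hf hp hp₀ hzeros]
      with α hα hlt
    obtain ⟨x, hx, hmax⟩ := exists_eq_penalizedSup hK (hne.mono (sep_subset _ _)) hf hp hα
    exact hmax ▸ hlt x hx

lemma mul_penalty_le (hK : IsCompact K) (hf : UpperSemicontinuousOn f K)
    (hp : LowerSemicontinuousOn p K) (hα : 0 ≤ α) {x : X} (hx : x ∈ K) :
    α * p x ≤ 2 * (penalizedSup K f p (α / 2) - (f x - α * p x)) := by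
  linarith [le_penalizedSup hK hf hp (by positivity : 0 ≤ α / 2) hx]

lemma tendsto_mul_penalty {ι : Type*} {l : Filter ι} {α : ι → ℝ} {x : ι → X}
    (hK : IsCompact K) (hf : UpperSemicontinuousOn f K) (hp : LowerSemicontinuousOn p K)
    (hp₀ : ∀ x ∈ K, 0 ≤ p x) (hne : {x ∈ K | p x = 0}.Nonempty)
    (hα : Tendsto α l atTop) (hx : ∀ i, x i ∈ K)
    (hmax : Tendsto (fun i => penalizedSup K f p (α i) - (f (x i) - α i * p (x i))) l (𝓝 0)) :
    Tendsto (fun i => α i * p (x i)) l (𝓝 0) := by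
  have hM := tendsto_penalizedSup hK hf hp hp₀ hne
  have hgap : Tendsto (fun i => 2 * (penalizedSup K f p (α i / 2) - (f (x i) - α i * p (x i))))
      l (𝓝 0) := by
    have hdiff := (hM.comp (hα.atTop_div_const two_pos)).sub (hM.comp hα)
    simpa using (hdiff.add hmax).const_mul 2
  refine squeeze_zero' ?_ ?_ hgap <;> filter_upwards [hα.eventually_ge_atTop 0] with i hi
  · exact mul_nonneg hi (hp₀ _ (hx i))
  · exact mul_penalty_le hK hf hp hi (hx i)

end Penalization

section Doubling

variable {τ E : Type*} {I : Set τ} {O : Set E}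

lemma upperSemicontinuousOn_sub_doubled {E₁ E₂ : Type*} [TopologicalSpace τ]
    [TopologicalSpace E₁] [TopologicalSpace E₂] {O₁ : Set E₁} {O₂ : Set E₂}
    {u : τ → E₁ → ℝ} {v : τ → E₂ → ℝ}
    (hu : UpperSemicontinuousOn (fun q : τ × E₁ => u q.1 q.2) (I ×ˢ O₁))
    (hv : LowerSemicontinuousOn (fun q : τ × E₂ => v q.1 q.2) (I ×ˢ O₂)) :
    UpperSemicontinuousOn (fun q : τ × E₁ × E₂ => u q.1 q.2.1 - v q.1 q.2.2) (I ×ˢ O₁ ×ˢ O₂) :=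
  upperSemicontinuousOn_sub
    (hu.comp (g := fun q : τ × E₁ × E₂ => (q.1, q.2.1)) (by fun_prop) fun _ hq => ⟨hq.1, hq.2.1⟩)
    (hv.comp (g := fun q : τ × E₁ × E₂ => (q.1, q.2.2)) (by fun_prop) fun _ hq => ⟨hq.1, hq.2.2⟩)

lemma setOf_exists_eq_image_prod {E₁ E₂ R : Type*} {O₁ : Set E₁} {O₂ : Set E₂}
    (F : τ → E₁ → E₂ → R) :
    {c | ∃ t ∈ I, ∃ x₁ ∈ O₁, ∃ x₂ ∈ O₂, c = F t x₁ x₂} =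
      (fun q : τ × E₁ × E₂ => F q.1 q.2.1 q.2.2) '' (I ×ˢ O₁ ×ˢ O₂) := by
  ext c
  simp [and_assoc, eq_comm]

lemma setOf_exists_eq_image_diagonal {R : Type*} (F : τ → E → E → R) :
    {c | ∃ t ∈ I, ∃ x ∈ O, c = F t x x} =
      (fun q : τ × E × E => F q.1 q.2.1 q.2.2) '' {q ∈ I ×ˢ O ×ˢ O | q.2.1 = q.2.2} := by
  ext c
  simp [and_assoc, eq_comm]

theorem stmt_9_general [TopologicalSpace τ] [MetricSpace E]
    (hI : I.Nonempty) (hIc : IsCompact I) (hO : O.Nonempty) (hOc : IsCompact O)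
    {u v : τ → E → ℝ}
    (hu : UpperSemicontinuousOn (fun q : τ × E => u q.1 q.2) (I ×ˢ O))
    (hv : LowerSemicontinuousOn (fun q : τ × E => v q.1 q.2) (I ×ˢ O))
    {Θ : ℕ → ℝ}
    (hΘ : ∀ n : ℕ, Θ n = sSup {c : ℝ | ∃ t ∈ I, ∃ x₁ ∈ O, ∃ x₂ ∈ O,
      c = u t x₁ - v t x₂ - ((n : ℝ) / 2) * dist x₁ x₂ ^ 2}) :
    (∀ n : ℕ, ∃ t ∈ I, ∃ x₁ ∈ O, ∃ x₂ ∈ O,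
      u t x₁ - v t x₂ - ((n : ℝ) / 2) * dist x₁ x₂ ^ 2 = Θ n) ∧
    Tendsto Θ atTop (𝓝 (sSup {c : ℝ | ∃ t ∈ I, ∃ x ∈ O, c = u t x - v t x})) ∧
    ∀ (t : ℕ → τ) (x₁ x₂ : ℕ → E),
      (∀ n : ℕ, t n ∈ I ∧ x₁ n ∈ O ∧ x₂ n ∈ O ∧
        u (t n) (x₁ n) - v (t n) (x₂ n) - ((n : ℝ) / 2) * dist (x₁ n) (x₂ n) ^ 2 = Θ n) →
      Tendsto (fun n : ℕ => (n : ℝ) * dist (x₁ n) (x₂ n) ^ 2) atTop (𝓝 0) := by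
  let K : Set (τ × E × E) := I ×ˢ O ×ˢ O
  let f : τ × E × E → ℝ := fun q => u q.1 q.2.1 - v q.1 q.2.2
  let p : τ × E × E → ℝ := fun q => dist q.2.1 q.2.2 ^ 2
  have hK : IsCompact K := hIc.prod (hOc.prod hOc)
  have hf : UpperSemicontinuousOn f K := upperSemicontinuousOn_sub_doubled hu hv
  have hp : LowerSemicontinuousOn p K :=
    (show Continuous p by fun_prop).lowerSemicontinuous.lowerSemicontinuousOn K
  have hp₀ : ∀ q ∈ K, 0 ≤ p q := fun q _ => sq_nonneg _
  have hzeros : {q ∈ K | p q = 0} = {q ∈ K | q.2.1 = q.2.2} := by simp [p]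
  have hne : {q ∈ K | p q = 0}.Nonempty := by
    obtain ⟨⟨t, ht⟩, x, hx⟩ := And.intro hI hO
    exact hzeros ▸ ⟨(t, x, x), ⟨ht, hx, hx⟩, rfl⟩
  have hΘM : ∀ n : ℕ, Θ n = penalizedSup K f p (n / 2) := fun n =>
    (hΘ n).trans (congrArg sSup (setOf_exists_eq_image_prod _))
  have hα : Tendsto (fun n : ℕ => (n : ℝ) / 2) atTop atTop :=
    tendsto_natCast_atTop_atTop.atTop_div_const two_pos
  refine ⟨fun n => ?_, ?_, fun t x₁ x₂ h => ?_⟩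
  · obtain ⟨⟨t, x₁, x₂⟩, ⟨ht, hx₁, hx₂⟩, hmax⟩ :=
      exists_eq_penalizedSup hK (hne.mono (sep_subset _ _)) hf hp (by positivity : 0 ≤ (n : ℝ) / 2)
    exact ⟨t, ht, x₁, hx₁, x₂, hx₂, hmax.trans (hΘM n).symm⟩
  · rw [funext hΘM, setOf_exists_eq_image_diagonal fun t x₁ x₂ => u t x₁ - v t x₂, ← hzeros]
    exact (tendsto_penalizedSup hK hf hp hp₀ hne).comp hα
  · choose ht hx₁ hx₂ hmax using h
    have hgap : ∀ n : ℕ, penalizedSup K f p (n / 2) -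
        (f (t n, x₁ n, x₂ n) - n / 2 * p (t n, x₁ n, x₂ n)) = 0 := fun n =>
      sub_eq_zero.2 ((hΘM n).symm.trans (hmax n).symm)
    have hpen : Tendsto (fun n : ℕ => (n : ℝ) / 2 * p (t n, x₁ n, x₂ n)) atTop (𝓝 0) :=
      tendsto_mul_penalty hK hf hp hp₀ hne hα (fun n => ⟨ht n, hx₁ n, hx₂ n⟩)
        (by simp only [hgap, tendsto_const_nhds])
    convert hpen.const_mul 2 using 2 <;> ring

end Doubling

/-- the doubling-of-variables estimate. For bounded `u` upper semicontinuous
and `v` lower semicontinuous on `[0,T] × O` with `O ⊆ ℝᵈ` nonempty compact, the penalized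
suprema `Θ_n = sup (u(t,x₁) - v(t,x₂) - (n/2)|x₁-x₂|²)` are attained, converge to
`sup_{[0,T]×O} (u - v)`, and along a subsequence of any choice of maximizers the
penalization `n·|x₁ⁿ - x₂ⁿ|²` tends to `0`. -/
theorem stmt_9 (d : ℕ) (O : Set (EuclideanSpace ℝ (Fin d))) (hO : O.Nonempty)
    (hOc : IsCompact O) (T : ℝ) (hT : 0 < T)
    (u v : ℝ → EuclideanSpace ℝ (Fin d) → ℝ)
    (hu_usc : UpperSemicontinuousOn (fun p : ℝ × EuclideanSpace ℝ (Fin d) => u p.1 p.2)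
      (Set.Icc 0 T ×ˢ O))
    (hv_lsc : LowerSemicontinuousOn (fun p : ℝ × EuclideanSpace ℝ (Fin d) => v p.1 p.2)
      (Set.Icc 0 T ×ˢ O))
    (Cu : ℝ) (hub : ∀ t ∈ Set.Icc (0:ℝ) T, ∀ x ∈ O, |u t x| ≤ Cu)
    (Cv : ℝ) (hvb : ∀ t ∈ Set.Icc (0:ℝ) T, ∀ x ∈ O, |v t x| ≤ Cv)
    (Θ : ℕ → ℝ)
    (hΘ : ∀ n : ℕ, Θ n = sSup {c : ℝ | ∃ t ∈ Set.Icc (0:ℝ) T, ∃ x₁ ∈ O, ∃ x₂ ∈ O,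
        c = u t x₁ - v t x₂ - ((n : ℝ) / 2) * ‖x₁ - x₂‖ ^ 2}) :
    (∀ n : ℕ, ∃ t ∈ Set.Icc (0:ℝ) T, ∃ x₁ ∈ O, ∃ x₂ ∈ O,
        u t x₁ - v t x₂ - ((n : ℝ) / 2) * ‖x₁ - x₂‖ ^ 2 = Θ n) ∧
    Tendsto Θ atTop
      (nhds (sSup {c : ℝ | ∃ t ∈ Set.Icc (0:ℝ) T, ∃ x ∈ O, c = u t x - v t x})) ∧
    (∀ (t : ℕ → ℝ) (x₁ x₂ : ℕ → EuclideanSpace ℝ (Fin d)),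
      (∀ n : ℕ, t n ∈ Set.Icc (0:ℝ) T ∧ x₁ n ∈ O ∧ x₂ n ∈ O ∧
        u (t n) (x₁ n) - v (t n) (x₂ n) - ((n : ℝ) / 2) * ‖x₁ n - x₂ n‖ ^ 2 = Θ n) →
      ∃ φ : ℕ → ℕ, StrictMono φ ∧
        Tendsto (fun k => (φ k : ℝ) * ‖x₁ (φ k) - x₂ (φ k)‖ ^ 2) atTop (nhds 0)) := by
  simp only [← dist_eq_norm] at hΘ ⊢
  obtain ⟨hatt, hlim, hpen⟩ :=
    stmt_9_general (nonempty_Icc.2 hT.le) isCompact_Icc hO hOc hu_usc hv_lsc hΘ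
  exact ⟨hatt, hlim, fun t x₁ x₂ h => ⟨id, strictMono_id, hpen t x₁ x₂ h⟩⟩
end

section
/- Let h : ℝ → ℝ be Lipschitz continuous and bounded, let λ : ℝ → [0,∞) be continuously differentiable with λ and λ′ bounded, let f(x) := exp(∫₀ˣ λ(u) du) satisfy inf f > 0 and sup f < ∞, and let F(x) := ∫₀ˣ f(u) du with inverse F⁻¹ : ℝ → ℝ. Then each of the following three maps from ℝ² to ℝ is bounded and Lipschitz continuous: (y, q) ↦ h(F⁻¹(q + F(y))); (y, q) ↦ λ(y)·h(F⁻¹(q + F(y))); and (y, q) ↦ h(F⁻¹(q + F(y)))·( 1 − f(F⁻¹(q + F(y)))/f(y) ). -/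
/-!
Write `g x = ∫₀ˣ λ`, so that `f = exp ∘ g`. A primitive of a bounded function is Lipschitz, and
a primitive of a function bounded below by `m > 0` has a Lipschitz inverse; hence `g`, `F`, `F⁻¹`
and `Y (y, q) = F⁻¹ (q + F y)` are Lipschitz. Since `exp` is Lipschitz on every half-line
`(-∞, b]`, so is the exponential of a Lipschitz function that is bounded above. This
applies to `f` and, because the quotient `f (Y (y, q)) / f y` is `exp (g (Y (y, q)) - g y)`, also to
that quotient. Finally, products of bounded Lipschitz functions are bounded and Lipschitz.
-/

open MeasureTheory
open scoped NNReal

/-- Bounded Lipschitz functions, the class in which the coefficients of the pricing equation have to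
lie. Neither the bound nor the Lipschitz constant is part of the data. -/
def BoundedLipschitz {α E : Type*} [PseudoMetricSpace α] [SeminormedAddCommGroup E]
    (g : α → E) : Prop :=
  (∃ C : ℝ, ∀ p, ‖g p‖ ≤ C) ∧ ∃ L : ℝ≥0, LipschitzWith L g

namespace BoundedLipschitz

variable {α β E R : Type*} [PseudoMetricSpace α] [PseudoMetricSpace β]
  [SeminormedAddCommGroup E] [NonUnitalSeminormedRing R]

theorem continuous {g : α → E} (hg : BoundedLipschitz g) : Continuous g :=
  hg.2.choose_spec.continuous

theorem comp_lipschitzWith {g : β → E} (hg : BoundedLipschitz g) {u : α → β} {K : ℝ≥0}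
    (hu : LipschitzWith K u) : BoundedLipschitz (fun p => g (u p)) := by
  obtain ⟨⟨C, hC⟩, L, hL⟩ := hg
  exact ⟨⟨C, fun p => hC (u p)⟩, L * K, hL.comp hu⟩

theorem const_sub {g : α → E} (hg : BoundedLipschitz g) (c : E) :
    BoundedLipschitz (fun p => c - g p) := by
  obtain ⟨⟨C, hC⟩, L, hL⟩ := hg
  exact ⟨⟨‖c‖ + C, fun p => norm_sub_le_of_le le_rfl (hC p)⟩, 0 + L,
    (LipschitzWith.const c).sub hL⟩

theorem mul {g k : α → R} (hg : BoundedLipschitz g) (hk : BoundedLipschitz k) :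
    BoundedLipschitz (fun p => g p * k p) := by
  obtain ⟨⟨C, hC⟩, L, hL⟩ := hg
  obtain ⟨⟨D, hD⟩, M, hM⟩ := hk
  refine ⟨⟨C * D, fun p => norm_mul_le_of_le (hC p) (hD p)⟩, (C * M + L * D).toNNReal,
    LipschitzWith.of_dist_le' fun x y => ?_⟩
  calc dist (g x * k x) (g y * k y)
      = ‖g x * (k x - k y) + (g x - g y) * k y‖ := by
        rw [dist_eq_norm, mul_sub, sub_mul, sub_add_sub_cancel]
    _ ≤ C * (M * dist x y) + L * dist x y * D :=
        norm_add_le_of_le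
          (norm_mul_le_of_le (hC x) (dist_eq_norm (k x) (k y) ▸ hM.dist_le_mul x y))
          (norm_mul_le_of_le (dist_eq_norm (g x) (g y) ▸ hL.dist_le_mul x y) (hD y))
    _ = (C * M + L * D) * dist x y := by ring

theorem exp_of_lipschitzWith {g : α → ℝ} {K : ℝ≥0} (hg : LipschitzWith K g) {M : ℝ}
    (hM : ∀ x, Real.exp (g x) ≤ M) : BoundedLipschitz (fun x => Real.exp (g x)) := by
  refine ⟨⟨M, fun x => by rw [Real.norm_eq_abs, Real.abs_exp]; exact hM x⟩, (M * K).toNNReal,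
    LipschitzWith.of_le_add_mul' (M * K) fun x y => ?_⟩
  have tangent : Real.exp (g x) * (g y - g x + 1) ≤ Real.exp (g y) :=
    calc Real.exp (g x) * (g y - g x + 1)
        ≤ Real.exp (g x) * Real.exp (g y - g x) := by gcongr; exact Real.add_one_le_exp _
      _ = Real.exp (g y) := by rw [← Real.exp_add, add_sub_cancel]
  have increment : Real.exp (g x) * (g x - g y) ≤ M * (K * dist x y) :=
    calc Real.exp (g x) * (g x - g y)
        ≤ Real.exp (g x) * (K * dist x y) := by
          gcongr; exact sub_le_iff_le_add'.2 (hg.le_add_mul x y)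
      _ ≤ M * (K * dist x y) := by gcongr; exact hM x
  linarith

theorem exp_div_exp_of_lipschitzWith {g k : α → ℝ} {K L : ℝ≥0} (hg : LipschitzWith K g)
    (hk : LipschitzWith L k) {m M : ℝ} (hM : ∀ x, Real.exp (g x) ≤ M) (hm_pos : 0 < m)
    (hm : ∀ x, m ≤ Real.exp (k x)) :
    BoundedLipschitz (fun x => Real.exp (g x) / Real.exp (k x)) := by
  simp only [← Real.exp_sub]
  refine exp_of_lipschitzWith (hg.sub hk) (M := M / m) fun x => ?_
  rw [Real.exp_sub]
  exact div_le_div₀ ((Real.exp_pos _).le.trans (hM x)) (hM x) hm_pos (hm x)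

theorem of_norm_deriv_le {𝕜 V : Type*} [RCLike 𝕜] [NormedAddCommGroup V] [NormedSpace 𝕜 V]
    {g : 𝕜 → V} (hd : Differentiable 𝕜 g) (hb : ∃ C : ℝ, ∀ x, ‖g x‖ ≤ C)
    (hb' : ∃ C : ℝ, ∀ x, ‖deriv g x‖ ≤ C) : BoundedLipschitz g := by
  obtain ⟨C, hC⟩ := hb'
  exact ⟨hb, C.toNNReal, lipschitzWith_of_nnnorm_deriv_le hd fun x =>
    NNReal.le_toNNReal_of_coe_le (hC x)⟩

end BoundedLipschitz

theorem lipschitzWith_integral_of_norm_le {E : Type*} [NormedAddCommGroup E] [NormedSpace ℝ E]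
    {g : ℝ → E} (hg : ∀ a b, IntervalIntegrable g volume a b) {C : ℝ} (hC : ∀ x, ‖g x‖ ≤ C)
    (a : ℝ) : LipschitzWith C.toNNReal (fun x => ∫ u in a..x, g u) :=
  LipschitzWith.of_dist_le' fun x y => by
    rw [dist_eq_norm, intervalIntegral.integral_interval_sub_left (hg a x) (hg a y), Real.dist_eq]
    exact intervalIntegral.norm_integral_le_of_norm_le_const fun u _ => hC u

theorem mul_sub_le_integral_of_le {g : ℝ → ℝ} (hg : ∀ a b, IntervalIntegrable g volume a b)
    {m : ℝ} (hm : ∀ x, m ≤ g x) {x y : ℝ} (hxy : x ≤ y) : m * (y - x) ≤ ∫ u in x..y, g u :=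
  calc m * (y - x) = ∫ _ in x..y, m := by
        rw [intervalIntegral.integral_const, smul_eq_mul, mul_comm]
    _ ≤ ∫ u in x..y, g u :=
        intervalIntegral.integral_mono_on hxy intervalIntegrable_const (hg x y) fun u _ => hm u

theorem antilipschitzWith_integral_of_le {g : ℝ → ℝ}
    (hg : ∀ a b, IntervalIntegrable g volume a b) {m : ℝ≥0} (hm_pos : 0 < m)
    (hm : ∀ x, m ≤ g x) (a : ℝ) : AntilipschitzWith m⁻¹ (fun x => ∫ u in a..x, g u) := by
  refine AntilipschitzWith.of_le_mul_dist fun x y => ?_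
  rw [NNReal.coe_inv, inv_mul_eq_div, le_div_iff₀ (NNReal.coe_pos.2 hm_pos), mul_comm]
  wlog hyx : y ≤ x generalizing x y
  · simpa only [dist_comm] using this y x (le_of_not_ge hyx)
  rw [Real.dist_eq, abs_of_nonneg (sub_nonneg.2 hyx), Real.dist_eq,
    intervalIntegral.integral_interval_sub_left (hg a x) (hg a y)]
  exact (mul_sub_le_integral_of_le hg hm hyx).trans (le_abs_self _)

theorem lipschitzWith_rightInverse_add {α E : Type*} [PseudoMetricSpace α]
    [SeminormedAddCommGroup E] {F : α → E} {G : E → α} {K L : ℝ≥0} (hF : LipschitzWith K F)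
    (hF' : AntilipschitzWith L F) (hG : Function.RightInverse G F) :
    LipschitzWith (L * (1 + K * 1)) (fun p : α × E => G (p.2 + F p.1)) :=
  (hF'.to_rightInverse hG).comp
    (LipschitzWith.prod_snd.add (hF.comp LipschitzWith.prod_fst))

theorem stmt_16_general {h lam f F Finv : ℝ → ℝ} (hh : BoundedLipschitz h)
    (hlam : BoundedLipschitz lam) (hf : ∀ x, f x = Real.exp (∫ u in (0 : ℝ)..x, lam u))
    (hf_below : ∃ m : ℝ, 0 < m ∧ ∀ x, m ≤ f x) (hf_above : ∃ M : ℝ, ∀ x, f x ≤ M)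
    (hF : ∀ x, F x = ∫ u in (0 : ℝ)..x, f u) (hFinv : Function.RightInverse Finv F) :
    BoundedLipschitz (fun p : ℝ × ℝ => h (Finv (p.2 + F p.1))) ∧
    BoundedLipschitz (fun p : ℝ × ℝ => lam p.1 * h (Finv (p.2 + F p.1))) ∧
    BoundedLipschitz (fun p : ℝ × ℝ =>
      h (Finv (p.2 + F p.1)) * (1 - f (Finv (p.2 + F p.1)) / f p.1)) := by
  obtain rfl : f = _ := funext hf
  obtain rfl : F = _ := funext hF
  obtain ⟨m, hm_pos, hm⟩ := hf_below
  obtain ⟨M, hM⟩ := hf_above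
  obtain ⟨C, hC⟩ := hlam.1
  have hg_lip := lipschitzWith_integral_of_norm_le hlam.continuous.intervalIntegrable hC 0
  have hf_lip := BoundedLipschitz.exp_of_lipschitzWith hg_lip hM
  have hf_int := hf_lip.continuous.intervalIntegrable (μ := volume)
  obtain ⟨B, hB⟩ := hf_lip.1
  have hY_lip := lipschitzWith_rightInverse_add (lipschitzWith_integral_of_norm_le hf_int hB 0)
    (antilipschitzWith_integral_of_le hf_int (m := ⟨m, hm_pos.le⟩) hm_pos hm 0) hFinv
  have hhY := hh.comp_lipschitzWith hY_lip
  have quotient := BoundedLipschitz.exp_div_exp_of_lipschitzWith (hg_lip.comp hY_lip)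
    (hg_lip.comp LipschitzWith.prod_fst) (fun _ => hM _) hm_pos (fun _ => hm _)
  exact ⟨hhY, (hlam.comp_lipschitzWith LipschitzWith.prod_fst).mul hhY,
    hhY.mul (quotient.const_sub 1)⟩

/-- for `h` bounded Lipschitz, `λ ≥ 0` of class `C¹` with `λ, λ'` bounded,
`f(x) = exp(∫₀ˣ λ)` bounded away from `0` and `∞`, `F(x) = ∫₀ˣ f` with inverse `F⁻¹`, each
of the coefficient maps `(y,q) ↦ h(F⁻¹(q + F(y)))`, `(y,q) ↦ λ(y)·h(F⁻¹(q + F(y)))` and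
`(y,q) ↦ h(F⁻¹(q + F(y)))·(1 - f(F⁻¹(q + F(y)))/f(y))` is bounded and Lipschitz on `ℝ²`. -/
theorem stmt_16 (h : ℝ → ℝ) (hh_l : ∃ L : NNReal, LipschitzWith L h)
    (hh_b : ∃ C : ℝ, ∀ x, |h x| ≤ C)
    (lam : ℝ → ℝ) (hlam_nonneg : ∀ x, 0 ≤ lam x) (hlam_smooth : ContDiff ℝ 1 lam)
    (hlam_b : ∃ C : ℝ, ∀ x, |lam x| ≤ C) (hlam'_b : ∃ C : ℝ, ∀ x, |deriv lam x| ≤ C)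
    (f : ℝ → ℝ) (hf : ∀ x, f x = Real.exp (∫ u in (0:ℝ)..x, lam u))
    (hf_below : ∃ m : ℝ, 0 < m ∧ ∀ x, m ≤ f x) (hf_above : ∃ M : ℝ, ∀ x, f x ≤ M)
    (F : ℝ → ℝ) (hF : ∀ x, F x = ∫ u in (0:ℝ)..x, f u)
    (Finv : ℝ → ℝ) (hFinv : ∀ x, Finv (F x) = x) (hFinv' : ∀ x, F (Finv x) = x) :
    ((∃ C : ℝ, ∀ p : ℝ × ℝ, |h (Finv (p.2 + F p.1))| ≤ C) ∧
      ∃ L : NNReal, LipschitzWith L (fun p : ℝ × ℝ => h (Finv (p.2 + F p.1)))) ∧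
    ((∃ C : ℝ, ∀ p : ℝ × ℝ, |lam p.1 * h (Finv (p.2 + F p.1))| ≤ C) ∧
      ∃ L : NNReal, LipschitzWith L (fun p : ℝ × ℝ => lam p.1 * h (Finv (p.2 + F p.1)))) ∧
    ((∃ C : ℝ, ∀ p : ℝ × ℝ,
        |h (Finv (p.2 + F p.1)) * (1 - f (Finv (p.2 + F p.1)) / f p.1)| ≤ C) ∧
      ∃ L : NNReal, LipschitzWith L (fun p : ℝ × ℝ =>
        h (Finv (p.2 + F p.1)) * (1 - f (Finv (p.2 + F p.1)) / f p.1))) :=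
  stmt_16_general ⟨hh_b, hh_l⟩
    (.of_norm_deriv_le (hlam_smooth.differentiable one_ne_zero) hlam_b hlam'_b)
    hf hf_below hf_above hF hFinv'
end
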